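/- Let (M,g,φ,ξ,η) be a (2n+1)-dimensional para-Sasaki-like Riemannian manifold with generalized symmetric metric connection ∇̄, where α and β are constants. Then R̄(ξ,y)ξ = (1−β)φ²y − αφy for every vector field y, where R̄ is the curvature tensor of ∇̄. -/

import Mathlib

/-- Abstract algebraic model of an almost paracontact almost paracomplex
Riemannian (apapR) manifold of dimension `2 n + 1`.  Here `R` plays the role of
the commutative ring of smooth functions `C^∞(M)` and `V` the `R`-module of
vector fields.  `act x f` is the derivative `x(f)` of a function along a vector
field, `bracket` is the Lie bracket, `g` the Riemannian metric, `(phi, xi, eta)`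
the almost paracontact almost paracomplex structure, `nab` the Levi-Civita
connection of `g` and `e` a (local) orthonormal frame with `e 0 = xi`. -/
structure ApapR (R V : Type*) [CommRing R] [Algebra ℝ R]
    [AddCommGroup V] [Module R V] where
  n : ℕ
  act : V → R → R
  bracket : V → V → V
  g : V → V → R
  phi : V → V
  xi : V
  eta : V → R
  nab : V → V → V
  e : Fin (2 * n + 1) → V
  act_addl : ∀ x y f, act (x + y) f = act x f + act y f
  act_smull : ∀ (h : R) (x : V) f, act (h • x) f = h * act x f
  act_addr : ∀ x f h, act x (f + h) = act x f + act x h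
  act_mul : ∀ x f h, act x (f * h) = f * act x h + h * act x f
  g_symm : ∀ x y, g x y = g y x
  g_addl : ∀ x y z, g (x + y) z = g x z + g y z
  g_smull : ∀ (f : R) x y, g (f • x) y = f * g x y
  phi_add : ∀ x y, phi (x + y) = phi x + phi y
  phi_smul : ∀ (f : R) x, phi (f • x) = f • phi x
  eta_eq : ∀ x, eta x = g x xi
  -- apapR structure axioms
  eta_xi : eta xi = 1
  phi_phi : ∀ x, phi (phi x) = x - eta x • xi
  phi_xi : phi xi = 0
  g_phi_phi : ∀ x y, g (phi x) (phi y) = g x y - eta x * eta y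
  -- orthonormal frame, `tr φ = 0`
  e_zero : e 0 = xi
  e_orthonormal : ∀ i j, g (e i) (e j) = if i = j then 1 else 0
  trace_phi : (∑ i, g (phi (e i)) (e i)) = 0
  -- Levi-Civita connection axioms
  nab_addl : ∀ x y z, nab (x + y) z = nab x z + nab y z
  nab_smull : ∀ (f : R) x y, nab (f • x) y = f • nab x y
  nab_addr : ∀ x y z, nab x (y + z) = nab x y + nab x z
  nab_leibniz : ∀ x (f : R) y, nab x (f • y) = f • nab x y + act x f • y
  nab_metric : ∀ x y z, act x (g y z) = g (nab x y) z + g y (nab x z)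
  nab_torsion : ∀ x y, nab x y - nab y x = bracket x y

namespace ApapR

variable {R V : Type*} [CommRing R] [Algebra ℝ R] [AddCommGroup V] [Module R V]

/-- The para-Sasaki-like condition `(∇_x φ)y = −g(x,y)ξ − η(y)x + 2η(x)η(y)ξ`. -/
def IsParaSasakiLike (S : ApapR R V) : Prop :=
  ∀ x y, S.nab x (S.phi y) - S.phi (S.nab x y)
    = -(S.g x y • S.xi) - S.eta y • x + (2 * S.eta x * S.eta y) • S.xi

/-- The generalized symmetric metric connection
`∇̄_x y = ∇_x y + α{g(x,y)ξ − η(y)x} + β{g(φx,y)ξ − η(y)φx}`. -/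
def gsmc (S : ApapR R V) (α β : R) (x y : V) : V :=
  S.nab x y + (α * S.g x y) • S.xi - (α * S.eta y) • x
    + (β * S.g (S.phi x) y) • S.xi - (β * S.eta y) • S.phi x

/-- Curvature tensor of a connection `D`:
`R_D(x,y)z = D_x D_y z − D_y D_x z − D_[x,y] z`. -/
def curv (S : ApapR R V) (D : V → V → V) (x y z : V) : V :=
  D x (D y z) - D y (D x z) - D (S.bracket x y) z

/-- Ricci tensor of a connection `D` with respect to the orthonormal frame. -/
def ric (S : ApapR R V) (D : V → V → V) (x y : V) : R :=
  ∑ i, S.g (S.curv D (S.e i) x y) (S.e i)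

/-- Scalar curvature of a connection `D`. -/
def scal (S : ApapR R V) (D : V → V → V) : R :=
  ∑ i, S.ric D (S.e i) (S.e i)

/-- Divergence of a vector field with respect to a connection `D`. -/
def divg (S : ApapR R V) (D : V → V → V) (x : V) : R :=
  ∑ i, S.g (D (S.e i) x) (S.e i)

/-- The associated metric `g̃(x,y) = g(x,φy) + η(x)η(y)`. -/
def tg (S : ApapR R V) (x y : V) : R := S.g x (S.phi y) + S.eta x * S.eta y

/-- A function is constant iff all its derivatives vanish. -/
def IsConstant (S : ApapR R V) (f : R) : Prop := ∀ x, S.act x f = 0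

end ApapR

namespace ApapR

variable {R V : Type*} [CommRing R] [Algebra ℝ R] [AddCommGroup V] [Module R V]

theorem aux_phi_sub (S : ApapR R V) (x y : V) : S.phi (x - y) = S.phi x - S.phi y := by
  rw [eq_sub_iff_add_eq, ← S.phi_add, sub_add_cancel]

theorem aux_nab_sub (S : ApapR R V) (x y z : V) : S.nab x (y - z) = S.nab x y - S.nab x z := by
  rw [eq_sub_iff_add_eq, ← S.nab_addr, sub_add_cancel]

theorem aux_phi3 (S : ApapR R V) (x : V) : S.phi (S.phi (S.phi x)) = S.phi x := by
  rw [S.phi_phi x, aux_phi_sub, S.phi_smul, S.phi_xi, smul_zero, sub_zero]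

theorem aux_eta_smul (S : ApapR R V) (f : R) (x : V) : S.eta (f • x) = f * S.eta x := by
  rw [S.eta_eq, S.eta_eq, S.g_smull]

theorem aux_eta_phi (S : ApapR R V) (x : V) : S.eta (S.phi x) = 0 := by
  have h := S.phi_phi (S.phi x)
  rw [aux_phi3] at h
  have h2 : S.eta (S.phi x) • S.xi = 0 := by
    rw [eq_sub_iff_add_eq] at h
    simpa using h
  have h3 := aux_eta_smul S (S.eta (S.phi x)) S.xi
  have h0 := aux_eta_smul S 0 S.xi
  rw [h2, S.eta_xi, mul_one] at h3
  rw [zero_smul, zero_mul] at h0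
  rw [← h3, h0]

theorem aux_act_one (S : ApapR R V) (x : V) : S.act x 1 = 0 := by
  have h := S.act_mul x 1 1
  simpa using h

theorem aux_eta_nab (S : ApapR R V) (x : V) : S.eta (S.nab x S.xi) = 0 := by
  have h := S.nab_metric x S.xi S.xi
  rw [← S.eta_eq, S.eta_xi, aux_act_one, S.g_symm S.xi, ← S.eta_eq, ← two_mul] at h
  have h2 : (algebraMap ℝ R (1/2)) * 2 = 1 := by
    rw [← map_ofNat (algebraMap ℝ R) 2, ← map_mul]; norm_num
  calc S.eta (S.nab x S.xi) = (algebraMap ℝ R (1/2)) * 2 * S.eta (S.nab x S.xi) := by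
        rw [h2, one_mul]
    _ = 0 := by rw [mul_assoc, ← h, mul_zero]

theorem aux_nab_xi (S : ApapR R V) (hS : S.IsParaSasakiLike) (x : V) :
    S.nab x S.xi = S.phi x := by
  have h0 : S.nab x (0 : V) = 0 := by simpa using aux_nab_sub S x 0 0
  have h := hS x S.xi
  rw [S.phi_xi, h0, S.eta_xi, ← S.eta_eq] at h
  have h1 : S.phi (S.nab x S.xi) = S.phi (S.phi x) := by
    rw [S.phi_phi x]
    have : S.phi (S.nab x S.xi) = -(0 - S.phi (S.nab x S.xi)) := by simp
    rw [this, h]; module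
  have h2 := congrArg S.phi h1
  rwa [aux_phi3, S.phi_phi, aux_eta_nab, zero_smul, sub_zero] at h2

theorem aux_gsmc_xi (S : ApapR R V) (hS : S.IsParaSasakiLike) (α β : R) (x : V) :
    S.gsmc α β x S.xi = S.phi x - β • S.phi x - α • S.phi (S.phi x) := by
  unfold gsmc
  rw [aux_nab_xi S hS, ← S.eta_eq, ← S.eta_eq, aux_eta_phi, S.eta_xi, S.phi_phi]
  module

theorem aux_gsmc_xi_left (S : ApapR R V) (α β : R) (x : V) :
    S.gsmc α β S.xi x = S.nab S.xi x := by
  have h0 : S.g 0 x = 0 := by simpa using S.g_smull 0 0 x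
  unfold gsmc
  rw [S.phi_xi, h0, S.g_symm, ← S.eta_eq]
  module

theorem aux_nab_phi (S : ApapR R V) (hS : S.IsParaSasakiLike) (y : V) :
    S.nab S.xi (S.phi y) = S.phi (S.nab S.xi y) := by
  have h := hS S.xi y
  rw [S.g_symm, ← S.eta_eq, S.eta_xi] at h
  rw [← sub_eq_zero, h]; module

/-- `R̄(ξ,y)ξ = (1−β)φ²y − αφy` on a para-Sasaki-like manifold,
for constants `α`, `β`. -/
theorem curv_gsmc_xi_xi (S : ApapR R V) (hS : S.IsParaSasakiLike) (α β : R)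
    (hα : S.IsConstant α) (hβ : S.IsConstant β) (y : V) :
    S.curv (S.gsmc α β) S.xi y S.xi
      = (1 - β) • S.phi (S.phi y) - α • S.phi y := by
  have h0 : S.gsmc α β S.xi S.xi = 0 := by
    have hp : S.phi 0 = 0 := by simpa using aux_phi_sub S 0 0
    rw [aux_gsmc_xi S hS, S.phi_xi, hp]; simp
  have h00 : S.gsmc α β y 0 = 0 := by
    have hn : S.nab y (0 : V) = 0 := by simpa using aux_nab_sub S y 0 0
    have he : S.eta 0 = 0 := by simpa using aux_eta_smul S 0 0
    have hg : ∀ z, S.g z 0 = 0 := fun z => by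
      rw [S.g_symm]; simpa using S.g_smull 0 0 z
    unfold gsmc
    rw [hn, he, hg, hg]; simp
  unfold curv
  rw [h0, h00, aux_gsmc_xi_left, aux_gsmc_xi S hS, aux_gsmc_xi S hS, aux_nab_sub, aux_nab_sub,
    S.nab_leibniz, S.nab_leibniz, hα, hβ, aux_nab_phi S hS, aux_nab_phi S hS, aux_nab_phi S hS,
    ← S.nab_torsion, aux_nab_xi S hS, aux_phi_sub, aux_phi_sub, aux_phi3]
  module

end ApapR
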